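/- arXiv:1003.2584 — 2 statements merged into one kernel-verified Lean document; each statement's English description precedes it below -/
import Mathlib

section
/- Let G be a group. If there exists a nonzero continuous linear functional φ on ℓ∞(G) that is invariant under the left-translation action of G, then G admits a left-invariant mean, i.e. G is amenable. (The mean is obtained by taking the absolute value of φ and normalising.) -/
noncomputable section
open scoped ENNReal

/-- `ℓ∞(G)`: the Banach space of bounded real-valued functions on `G` with the sup norm. -/
abbrev Linf (G : Type*) : Type _ := ↥(lp (fun _ : G => ℝ) ∞)

/-- The left-translation action of `G` on `ℓ∞(G)`: `(g · f)(h) = f (g⁻¹ h)`. -/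
def ltrans {G : Type*} [Group G] (g : G) (f : Linf G) : Linf G :=
  ⟨fun h => f (g⁻¹ * h),
    memℓp_infty ⟨‖f‖, by
      rintro x ⟨h, rfl⟩
      exact lp.norm_apply_le_norm ENNReal.top_ne_zero f (g⁻¹ * h)⟩⟩

/-- The constant function `1` as an element of `ℓ∞(G)`. -/
def lone (G : Type*) : Linf G :=
  ⟨fun _ => 1, memℓp_infty ⟨1, by rintro x ⟨h, rfl⟩; simp⟩⟩

section PosPart

variable {G : Type*}

theorem linf_abs_le (f : Linf G) (h : G) : |f h| ≤ ‖f‖ :=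
  lp.norm_apply_le_norm ENNReal.top_ne_zero f h

theorem linf_norm_le (f : Linf G) {C : ℝ} (hC : 0 ≤ C) (h : ∀ x, |f x| ≤ C) : ‖f‖ ≤ C :=
  lp.norm_le_of_forall_le hC h

/-- Build an element of `ℓ∞` from a bounded function. -/
def linfMk (f : G → ℝ) (C : ℝ) (h : ∀ x, |f x| ≤ C) : Linf G :=
  ⟨f, memℓp_infty ⟨C, by rintro x ⟨y, rfl⟩; exact h y⟩⟩

@[simp] theorem linfMk_apply (f : G → ℝ) (C : ℝ) (h : ∀ x, |f x| ≤ C) (x : G) :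
    linfMk f C h x = f x := rfl

@[simp] theorem ltrans_apply [Group G] (g : G) (f : Linf G) (x : G) :
    ltrans g f x = f (g⁻¹ * x) := rfl

@[simp] theorem linf_add (f g : Linf G) (x : G) : (f + g) x = f x + g x := rfl
@[simp] theorem linf_sub (f g : Linf G) (x : G) : (f - g) x = f x - g x := rfl
@[simp] theorem linf_neg (f : Linf G) (x : G) : (-f) x = -f x := rfl
@[simp] theorem linf_zero (x : G) : (0 : Linf G) x = 0 := rfl

theorem linf_ext {f g : Linf G} (h : ∀ x, f x = g x) : f = g := lp.ext (funext h)

/-- Positive part of a bounded function. -/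
def lpos (f : Linf G) : Linf G :=
  linfMk (fun x => max (f x) 0) ‖f‖ (fun x => by
    have := linf_abs_le f x
    rw [abs_le] at *
    have h0 := norm_nonneg f
    exact ⟨le_trans (by linarith) (le_max_right _ _), max_le this.2 h0⟩)

@[simp] theorem lpos_apply (f : Linf G) (x : G) : lpos f x = max (f x) 0 := rfl

theorem lpos_norm (f : Linf G) : ‖lpos f‖ ≤ ‖f‖ := by
  refine linf_norm_le _ (norm_nonneg f) fun x => ?_
  have := linf_abs_le f x
  rw [lpos_apply, abs_of_nonneg (le_max_right _ _)]
  exact max_le ((le_abs_self _).trans this) (norm_nonneg _)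

/-- Pointwise minimum. -/
def lmin (f g : Linf G) : Linf G :=
  linfMk (fun x => min (f x) (g x)) (max ‖f‖ ‖g‖) (fun x => by
    rcases min_choice (f x) (g x) with h | h <;> rw [h]
    · exact (linf_abs_le f x).trans (le_max_left _ _)
    · exact (linf_abs_le g x).trans (le_max_right _ _))

@[simp] theorem lmin_apply (f g : Linf G) (x : G) : lmin f g x = min (f x) (g x) := rfl

/-- Values of `φ` on the order interval `[0, f]`. -/
def pset (φ : Linf G →L[ℝ] ℝ) (f : Linf G) : Set ℝ :=
  {r | ∃ k : Linf G, (∀ x, 0 ≤ k x ∧ k x ≤ f x) ∧ φ k = r}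

/-- The positive part of `φ` on the positive cone. -/
def pfun (φ : Linf G →L[ℝ] ℝ) (f : Linf G) : ℝ := sSup (pset φ f)

theorem pset_le (φ : Linf G →L[ℝ] ℝ) (f : Linf G) : ∀ r ∈ pset φ f, r ≤ ‖φ‖ * ‖f‖ := by
  rintro r ⟨k, hk, rfl⟩
  refine (le_abs_self _).trans ((φ.le_opNorm k).trans ?_)
  gcongr
  refine linf_norm_le _ (norm_nonneg f) fun x => ?_
  rw [abs_of_nonneg (hk x).1]
  exact (hk x).2.trans ((le_abs_self _).trans (linf_abs_le f x))

theorem le_pfun (φ : Linf G →L[ℝ] ℝ) {f k : Linf G} (hk : ∀ x, 0 ≤ k x ∧ k x ≤ f x) :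
    φ k ≤ pfun φ f := le_csSup ⟨_, pset_le φ f⟩ ⟨k, hk, rfl⟩

theorem pfun_le (φ : Linf G →L[ℝ] ℝ) {f : Linf G} (hf : ∀ x, 0 ≤ f x) {C : ℝ}
    (h : ∀ k : Linf G, (∀ x, 0 ≤ k x ∧ k x ≤ f x) → φ k ≤ C) : pfun φ f ≤ C := by
  refine csSup_le ⟨φ f, f, fun x => ⟨hf x, le_rfl⟩, rfl⟩ ?_
  rintro r ⟨k, hk, rfl⟩
  exact h k hk

theorem pfun_nonneg (φ : Linf G →L[ℝ] ℝ) {f : Linf G} (hf : ∀ x, 0 ≤ f x) : 0 ≤ pfun φ f := by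
  have := le_pfun φ (f := f) (k := 0) (fun x => ⟨le_rfl, hf x⟩)
  simpa using this

theorem pfun_bound (φ : Linf G →L[ℝ] ℝ) {f : Linf G} (hf : ∀ x, 0 ≤ f x) :
    pfun φ f ≤ ‖φ‖ * ‖f‖ :=
  pfun_le φ hf fun k hk => pset_le φ f _ ⟨k, hk, rfl⟩

theorem pfun_add (φ : Linf G →L[ℝ] ℝ) {a b : Linf G} (ha : ∀ x, 0 ≤ a x) (hb : ∀ x, 0 ≤ b x) :
    pfun φ (a + b) = pfun φ a + pfun φ b := by
  apply le_antisymm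
  · refine pfun_le φ (fun x => add_nonneg (ha x) (hb x)) fun k hk => ?_
    have e : k = lmin k a + (k - lmin k a) := by abel
    rw [e, map_add]
    refine add_le_add (le_pfun φ fun x => ?_) (le_pfun φ fun x => ?_)
    · exact ⟨le_min (hk x).1 (ha x), min_le_right _ _⟩
    · have h1 := hk x
      have h2 := hb x
      simp only [linf_sub, lmin_apply, linf_add] at *
      rcases min_cases (k x) (a x) with h | h <;> rw [h.1] <;> constructor <;> linarith
  · rw [← le_sub_iff_add_le]
    refine pfun_le φ ha fun k hk => ?_
    rw [le_sub_comm]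
    refine pfun_le φ hb fun l hl => ?_
    rw [le_sub_iff_add_le', ← map_add]
    exact le_pfun φ fun x => ⟨add_nonneg (hk x).1 (hl x).1, add_le_add (hk x).2 (hl x).2⟩

theorem pfun_diff (φ : Linf G →L[ℝ] ℝ) {a b c d : Linf G} (ha : ∀ x, 0 ≤ a x)
    (hb : ∀ x, 0 ≤ b x) (hc : ∀ x, 0 ≤ c x) (hd : ∀ x, 0 ≤ d x) (h : a - b = c - d) :
    pfun φ a - pfun φ b = pfun φ c - pfun φ d := by
  have e : a + d = c + b := by rwa [sub_eq_sub_iff_add_eq_add] at h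
  have := congrArg (pfun φ) e
  rw [pfun_add φ ha hd, pfun_add φ hc hb] at this
  linarith

theorem lpos_nonneg (f : Linf G) (x : G) : 0 ≤ lpos f x := le_max_right _ _

theorem lpos_sub (f : Linf G) : lpos f - lpos (-f) = f := by
  apply linf_ext
  intro x
  simp only [linf_sub, lpos_apply, linf_neg]
  rcases le_total (f x) 0 with h | h
  · rw [max_eq_right h, max_eq_left (by linarith)]; ring
  · rw [max_eq_left h, max_eq_right (by linarith)]; ring

theorem exists_pos_part (φ : Linf G →L[ℝ] ℝ) : ∃ ψ : Linf G →L[ℝ] ℝ,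
    ∀ a b : Linf G, (∀ x, 0 ≤ a x) → (∀ x, 0 ≤ b x) → ψ (a - b) = pfun φ a - pfun φ b := by
  let m : Linf G →+ ℝ := AddMonoidHom.mk' (fun f => pfun φ (lpos f) - pfun φ (lpos (-f))) (by
    intro f g
    have h1 := pfun_add φ (lpos_nonneg f) (lpos_nonneg g)
    have h2 := pfun_add φ (lpos_nonneg (-f)) (lpos_nonneg (-g))
    have := pfun_diff φ (lpos_nonneg (f + g)) (lpos_nonneg (-(f + g)))
      (c := lpos f + lpos g) (d := lpos (-f) + lpos (-g))
      (fun x => add_nonneg (lpos_nonneg f x) (lpos_nonneg g x))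
      (fun x => add_nonneg (lpos_nonneg (-f) x) (lpos_nonneg (-g) x))
      (by rw [lpos_sub, add_sub_add_comm, lpos_sub, lpos_sub])
    rw [this, h1, h2]; ring)
  have hm : Continuous m := by
    refine AddMonoidHomClass.continuous_of_bound m ‖φ‖ fun f => ?_
    change |pfun φ (lpos f) - pfun φ (lpos (-f))| ≤ _
    have a1 := pfun_nonneg φ (lpos_nonneg f)
    have a2 := pfun_nonneg φ (lpos_nonneg (-f))
    have b1 := pfun_bound φ (lpos_nonneg f)
    have b2 := pfun_bound φ (lpos_nonneg (-f))
    have c1 := mul_le_mul_of_nonneg_left (lpos_norm f) (norm_nonneg φ)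
    have c2 := mul_le_mul_of_nonneg_left (lpos_norm (-f)) (norm_nonneg φ)
    rw [norm_neg] at c2
    rw [abs_le]; constructor <;> linarith
  refine ⟨m.toRealLinearMap hm, fun a b ha hb => ?_⟩
  change pfun φ (lpos (a - b)) - pfun φ (lpos (-(a - b))) = _
  exact pfun_diff φ (lpos_nonneg _) (lpos_nonneg _) ha hb (lpos_sub _)

theorem pfun_ltrans_le [Group G] (φ : Linf G →L[ℝ] ℝ)
    (hinv : ∀ (g : G) (f : Linf G), φ (ltrans g f) = φ f) (g : G) {f : Linf G}
    (hf : ∀ x, 0 ≤ f x) : pfun φ (ltrans g f) ≤ pfun φ f := by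
  refine pfun_le φ (f := ltrans g f) (fun x => hf _) fun k hk => ?_
  rw [← hinv g⁻¹ k]
  refine le_pfun φ fun x => ?_
  simpa using hk (g * x)

theorem pfun_ltrans [Group G] (φ : Linf G →L[ℝ] ℝ)
    (hinv : ∀ (g : G) (f : Linf G), φ (ltrans g f) = φ f) (g : G) {f : Linf G}
    (hf : ∀ x, 0 ≤ f x) : pfun φ (ltrans g f) = pfun φ f := by
  refine le_antisymm (pfun_ltrans_le φ hinv g hf) ?_
  have h := pfun_ltrans_le φ hinv g⁻¹ (f := ltrans g f) (fun x => hf _)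
  have e : ltrans g⁻¹ (ltrans g f) = f := linf_ext fun x => by simp
  rwa [e] at h

theorem mean_of_positive [Group G] (ψ : Linf G →L[ℝ] ℝ) (h0 : ψ ≠ 0)
    (hpos : ∀ f : Linf G, (∀ h : G, 0 ≤ f h) → 0 ≤ ψ f)
    (hinv : ∀ (g : G) (f : Linf G), ψ (ltrans g f) = ψ f) :
    ∃ μ : Linf G →L[ℝ] ℝ,
      (∀ f : Linf G, (∀ h : G, 0 ≤ f h) → 0 ≤ μ f) ∧ ‖μ‖ = 1 ∧
      (∀ (g : G) (f : Linf G), μ (ltrans g f) = μ f) := by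
  refine ⟨‖ψ‖⁻¹ • ψ, fun f hf => ?_, ?_, fun g f => ?_⟩
  · exact mul_nonneg (inv_nonneg.2 (norm_nonneg _)) (hpos f hf)
  · rw [norm_smul, norm_inv, norm_norm, inv_mul_cancel₀ (norm_ne_zero_iff.2 h0)]
  · change ‖ψ‖⁻¹ * ψ _ = ‖ψ‖⁻¹ * ψ _
    rw [hinv]

end PosPart

/-- If a group `G` admits a nonzero continuous `G`-invariant linear functional on `ℓ∞(G)`,
then `G` admits a left-invariant mean, i.e. `G` is amenable. -/
theorem amenable_of_exists_nonzero_invariant_functional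
    (G : Type*) [Group G]
    (φ : Linf G →L[ℝ] ℝ) (hφ : φ ≠ 0)
    (hinv : ∀ (g : G) (f : Linf G), φ (ltrans g f) = φ f) :
    ∃ μ : Linf G →L[ℝ] ℝ,
      (∀ f : Linf G, (∀ h : G, 0 ≤ f h) → 0 ≤ μ f) ∧ ‖μ‖ = 1 ∧
      (∀ (g : G) (f : Linf G), μ (ltrans g f) = μ f) := by
  by_cases hc : ∃ f : Linf G, (∀ x, 0 ≤ f x) ∧ 0 < φ f
  · obtain ⟨f, hf, hpf⟩ := hc
    obtain ⟨ψ, hψ⟩ := exists_pos_part φ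
    have hz : pfun φ (0 : Linf G) = 0 :=
      le_antisymm (by simpa using pfun_bound φ (f := (0 : Linf G)) (fun _ => le_rfl))
        (pfun_nonneg φ (fun _ => le_rfl))
    have hψ' : ∀ a : Linf G, (∀ x, 0 ≤ a x) → ψ a = pfun φ a := fun a ha => by
      have := hψ a 0 ha (fun _ => le_rfl)
      rwa [hz, sub_zero, sub_zero] at this
    refine mean_of_positive ψ ?_ (fun a ha => ?_) (fun g a => ?_)
    · rintro rfl
      have h1 := hψ' f hf
      have h2 := le_pfun φ (f := f) (k := f) (fun x => ⟨hf x, le_rfl⟩)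
      rw [← h1] at h2
      exact absurd hpf (not_lt.2 h2)
    · rw [hψ' a ha]; exact pfun_nonneg φ ha
    · have e : ltrans g a = ltrans g (lpos a) - ltrans g (lpos (-a)) := by
        conv_lhs => rw [← lpos_sub a]
        rfl
      rw [e, hψ (ltrans g (lpos a)) (ltrans g (lpos (-a)))
        (fun x => lpos_nonneg a _) (fun x => lpos_nonneg (-a) _),
        pfun_ltrans φ hinv g (lpos_nonneg a), pfun_ltrans φ hinv g (lpos_nonneg (-a)),
        ← hψ _ _ (lpos_nonneg a) (lpos_nonneg (-a)), lpos_sub]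
  · push Not at hc
    refine mean_of_positive (-φ) (neg_ne_zero.2 hφ) (fun f hf => ?_) (fun g f => ?_)
    · exact neg_nonneg.2 (hc f hf)
    · exact congrArg Neg.neg (hinv g f)
end
end

section
/- A countable discrete group G is amenable if and only if there is no family (f_g)_{g ∈ G} of elements of ℓ∞(G) with Σ_{g ∈ G} ‖f_g‖_∞ < ∞ such that Σ_{g ∈ G} (g·f_g − f_g) = 1, the sum converging in the supremum norm and 1 denoting the constant function with value 1. (This is the non-vanishing of the fundamental class ι[1] in the ℓ¹-homology group H₀^{ℓ¹}(G, ℓ∞(G)).) -/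
noncomputable section
open scoped ENNReal

/-- The `ℓ¹` norm on finitely supported functions. -/
def nOne {G : Type*} (φ : G →₀ ℝ) : ℝ := ∑' h, |φ h|

lemma summable_fs {G : Type*} (φ : G →₀ ℝ) (u : G → ℝ) (hu : ∀ h, φ h = 0 → u h = 0) :
    Summable u := by
  refine summable_of_ne_finset_zero (s := φ.support) ?_
  intro b hb
  exact hu b (by simpa using hb)

lemma nOne_nonneg {G : Type*} (φ : G →₀ ℝ) : 0 ≤ nOne φ := tsum_nonneg fun _ => abs_nonneg _

lemma summable_abs_fs {G : Type*} (φ : G →₀ ℝ) : Summable fun h => |φ h| :=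
  summable_fs φ _ (by intro h hh; simp [hh])

lemma nOne_add {G : Type*} (φ ψ : G →₀ ℝ) : nOne (φ + ψ) ≤ nOne φ + nOne ψ := by
  unfold nOne
  rw [← (summable_abs_fs φ).tsum_add (summable_abs_fs ψ)]
  exact (summable_abs_fs (φ + ψ)).tsum_le_tsum (fun h => by simpa using abs_add_le _ _)
    ((summable_abs_fs φ).add (summable_abs_fs ψ))

lemma nOne_smul {G : Type*} (c : ℝ) (hc : 0 < c) (φ : G →₀ ℝ) : nOne (c • φ) = c * nOne φ := by
  unfold nOne
  rw [← tsum_mul_left]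
  simp [abs_mul, abs_of_pos hc]

lemma nOne_single {G : Type*} (h : G) (a : ℝ) : nOne (Finsupp.single h a) = |a| := by
  classical
  unfold nOne
  rw [tsum_eq_single h]
  · simp
  · intro b hb
    simp [Finsupp.single_apply, hb.symm]

lemma nOne_eq_zero {G : Type*} (φ : G →₀ ℝ) (h : nOne φ ≤ 0) : φ = 0 := by
  ext x
  have h1 := (summable_abs_fs φ).le_tsum x (fun _ _ => abs_nonneg _)
  have h2 : |φ x| ≤ 0 := h1.trans h
  simpa using h2

/-- Translation difference `φ ↦ (k ↦ φ (g k) - φ k)` on finitely supported functions. -/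
def dShift {G : Type*} [Group G] (g : G) : (G →₀ ℝ) →ₗ[ℝ] (G →₀ ℝ) :=
  (Finsupp.domLCongr (Equiv.mulLeft g⁻¹)).toLinearMap - LinearMap.id

lemma dShift_apply {G : Type*} [Group G] (g k : G) (φ : G →₀ ℝ) :
    dShift g φ k = φ (g * k) - φ k := by
  simp [dShift, Finsupp.domLCongr_apply, Finsupp.domCongr_apply, Finsupp.equivMapDomain_apply]

lemma dShift_single {G : Type*} [Group G] (g h : G) :
    dShift g (Finsupp.single h (1 : ℝ)) = Finsupp.single (g⁻¹ * h) 1 - Finsupp.single h 1 := by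
  simp [dShift, Finsupp.domLCongr_single]

lemma abs_le_nrm {G : Type*} (f : Linf G) (h : G) : |f h| ≤ ‖f‖ :=
  lp.norm_apply_le_norm ENNReal.top_ne_zero f h

lemma pair_le {G : Type*} [Group G] (g : G) (f : Linf G) (φ : G →₀ ℝ) :
    ∑' h, |φ h| * (f (g⁻¹ * h) - f h) ≤ ‖f‖ * nOne (dShift g φ) := by
  have s1 : Summable fun h => |φ h| * f (g⁻¹ * h) :=
    summable_fs φ _ (by intro h hh; simp [hh])
  have s2 : Summable fun h => |φ h| * f h := summable_fs φ _ (by intro h hh; simp [hh])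
  have e1 : ∑' h, |φ h| * f (g⁻¹ * h) = ∑' k, |φ (g * k)| * f k := by
    rw [← (Equiv.mulLeft g).tsum_eq]
    simp
  have s3 : Summable fun k => |φ (g * k)| * f k := by
    have := (Equiv.mulLeft g).summable_iff.mpr s1
    simpa [Function.comp_def] using this
  simp only [mul_sub]
  rw [s1.tsum_sub s2, e1, ← s3.tsum_sub s2, nOne, ← tsum_mul_left]
  refine (s3.sub s2).tsum_le_tsum ?_ ((summable_abs_fs _).mul_left _)
  intro k
  rw [dShift_apply, ← sub_mul]
  calc (|φ (g * k)| - |φ k|) * f k ≤ |(|φ (g * k)| - |φ k|) * f k| := le_abs_self _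
    _ = |(|φ (g * k)| - |φ k|)| * |f k| := abs_mul _ _
    _ ≤ |φ (g * k) - φ k| * ‖f‖ :=
        mul_le_mul (abs_abs_sub_abs_le_abs_sub _ _) (abs_le_nrm f k) (abs_nonneg _) (abs_nonneg _)
    _ = _ := mul_comm _ _

lemma key_ineq {G : Type*} [Group G] (S : Finset G) (f : G → Linf G) (ε : ℝ)
    (hf : ∀ h, ε ≤ ∑ g ∈ S, (f g (g⁻¹ * h) - f g h)) (φ : G →₀ ℝ) :
    ε * nOne φ ≤ ∑ g ∈ S, ‖f g‖ * nOne (dShift g φ) := by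
  have s : ∀ g ∈ S, Summable fun h => |φ h| * (f g (g⁻¹ * h) - f g h) := fun g _ =>
    summable_fs φ _ (by intro h hh; simp [hh])
  calc ε * nOne φ = ∑' h, |φ h| * ε := by rw [nOne, tsum_mul_right, mul_comm]
    _ ≤ ∑' h, ∑ g ∈ S, |φ h| * (f g (g⁻¹ * h) - f g h) := by
        refine Summable.tsum_le_tsum ?_ ((summable_abs_fs φ).mul_right _) (summable_sum s)
        intro h
        rw [← Finset.mul_sum]
        exact mul_le_mul_of_nonneg_left (hf h) (abs_nonneg _)
    _ = ∑ g ∈ S, ∑' h, |φ h| * (f g (g⁻¹ * h) - f g h) := Summable.tsum_finsetSum s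
    _ ≤ _ := Finset.sum_le_sum fun g _ => pair_le g (f g) φ

lemma solve {G : Type*} [Group G] (S : Finset G) (f : G → Linf G) (ε : ℝ) (hε : 0 < ε)
    (hf : ∀ h, ε ≤ ∑ g ∈ S, (f g (g⁻¹ * h) - f g h)) :
    ∃ F : G → Linf G, (∀ g ∉ S, F g = 0) ∧
      ∀ h, ∑ g ∈ S, (F g (g⁻¹ * h) - F g h) = 1 := by
  classical
  let L : (G →₀ ℝ) →ₗ[ℝ] (G → (G →₀ ℝ)) :=
    ∑ g ∈ S, (LinearMap.single ℝ (fun _ : G => (G →₀ ℝ)) g).comp (dShift g)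
  have hL : ∀ φ, L φ = ∑ g ∈ S, Pi.single g (dShift g φ) := by
    intro φ; simp [L, LinearMap.sum_apply]
  have hLg : ∀ φ, ∀ g ∈ S, L φ g = dShift g φ := by
    intro φ g hg
    rw [hL, Finset.sum_apply, Finset.sum_eq_single g]
    · simp
    · intro b _ hb
      simp [Pi.single_apply, hb.symm]
    · intro h; exact absurd hg h
  let q : (G → (G →₀ ℝ)) → ℝ := fun ψ => ε⁻¹ * ∑ g ∈ S, ‖f g‖ * nOne (ψ g)
  have hq : ∀ φ, nOne φ ≤ q (L φ) := by
    intro φ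
    have h1 := key_ineq S f ε hf φ
    have h2 : ∑ g ∈ S, ‖f g‖ * nOne (L φ g) = ∑ g ∈ S, ‖f g‖ * nOne (dShift g φ) :=
      Finset.sum_congr rfl fun g hg => by rw [hLg φ g hg]
    simp only [q, h2]
    rw [inv_mul_eq_div, le_div_iff₀ hε, mul_comm]
    exact h1
  have hinj : LinearMap.ker L = ⊥ := by
    rw [LinearMap.ker_eq_bot']
    intro φ h0
    apply nOne_eq_zero
    refine (hq φ).trans ?_
    simp [q, h0, nOne]
  obtain ⟨R, hR⟩ := L.exists_leftInverse_of_injective hinj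
  have hR' : ∀ φ, R (L φ) = φ := fun φ => LinearMap.congr_fun hR φ
  let sm : (G →₀ ℝ) →ₗ[ℝ] ℝ := Finsupp.linearCombination ℝ (fun _ : G => (1 : ℝ))
  have hsm : ∀ φ, sm φ ≤ nOne φ := by
    intro φ
    have : sm φ = ∑ h ∈ φ.support, φ h := by
      simp [sm, Finsupp.linearCombination_apply, Finsupp.sum]
    rw [this]
    exact (Finset.sum_le_sum fun h _ => le_abs_self _).trans
      ((summable_abs_fs φ).sum_le_tsum _ fun _ _ => abs_nonneg _)
  obtain ⟨Λ, hΛ1, hΛ2⟩ := exists_extension_of_le_sublinear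
    ⟨LinearMap.range L, (sm.comp R).comp (LinearMap.range L).subtype⟩ q
    (by
      intro c hc ψ
      simp only [q, Pi.smul_apply, nOne_smul c hc, Finset.mul_sum]
      exact Finset.sum_congr rfl fun _ _ => by ring)
    (by
      intro x y
      simp only [q, Pi.add_apply]
      rw [← mul_add, ← Finset.sum_add_distrib]
      refine mul_le_mul_of_nonneg_left (Finset.sum_le_sum fun g _ => ?_) (inv_pos.2 hε).le
      rw [← mul_add]
      exact mul_le_mul_of_nonneg_left (nOne_add _ _) (norm_nonneg _))
    (by
      rintro ⟨_, φ, rfl⟩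
      change sm (R (L φ)) ≤ q (L φ)
      rw [hR']
      exact (hsm φ).trans (hq φ))
  have hΛL : ∀ φ, Λ (L φ) = sm φ := by
    intro φ
    have h := hΛ1 ⟨L φ, φ, rfl⟩
    refine h.trans ?_
    change sm (R (L φ)) = _
    rw [hR']
  have hqs : ∀ g ∈ S, ∀ h a, q (Pi.single g (Finsupp.single h a)) = ε⁻¹ * (‖f g‖ * |a|) := by
    intro g hg h a
    simp only [q]
    rw [Finset.sum_eq_single g]
    · simp [nOne_single]
    · intro b _ hb
      simp [Pi.single_apply, hb, nOne]
    · intro h; exact absurd hg h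
  have hbd : ∀ g ∈ S, ∀ h, |Λ (Pi.single g (Finsupp.single h 1))| ≤ ε⁻¹ * ‖f g‖ := by
    intro g hg h
    rw [abs_le]
    constructor
    · have h1 := hΛ2 (Pi.single g (Finsupp.single h (-1)))
      rw [hqs g hg, Finsupp.single_neg, Pi.single_neg, map_neg] at h1
      simp only [abs_neg, abs_one, mul_one] at h1
      linarith
    · have h1 := hΛ2 (Pi.single g (Finsupp.single h 1))
      rw [hqs g hg] at h1
      simpa using h1
  let F : G → Linf G := fun g => if hg : g ∈ S then
    ⟨fun h => Λ (Pi.single g (Finsupp.single h 1)), memℓp_infty ⟨ε⁻¹ * ‖f g‖, by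
      rintro x ⟨h, rfl⟩
      exact hbd g hg h⟩⟩ else 0
  have hF : ∀ g ∈ S, ∀ h, F g h = Λ (Pi.single g (Finsupp.single h 1)) := by
    intro g hg h
    simp only [F, dif_pos hg]
  refine ⟨F, fun g hg => by simp only [F, dif_neg hg], fun h => ?_⟩
  have h1 := hΛL (Finsupp.single h 1)
  rw [hL, map_sum] at h1
  have h2 : sm (Finsupp.single h 1) = 1 := by simp [sm]
  rw [← h2, ← h1]
  refine Finset.sum_congr rfl fun g hg => ?_
  rw [dShift_single, Pi.single_sub, map_sub, hF g hg, hF g hg]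

/-- Translation as a linear map. -/
def ltransL {G : Type*} [Group G] (g : G) : Linf G →ₗ[ℝ] Linf G where
  toFun := ltrans g
  map_add' _ _ := rfl
  map_smul' _ _ := rfl

/-- The boundary map on finitely supported families. -/
def bdry (G : Type*) [Group G] : (G →₀ Linf G) →ₗ[ℝ] Linf G :=
  Finsupp.lsum ℝ fun g => ltransL g - LinearMap.id

lemma bdry_apply {G : Type*} [Group G] (f : G →₀ Linf G) (h : G) :
    bdry G f h = ∑ g ∈ f.support, (f g (g⁻¹ * h) - f g h) := by
  have : bdry G f = ∑ g ∈ f.support, (ltrans g (f g) - f g) := rfl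
  rw [this, lp.coeFn_sum, Finset.sum_apply]
  rfl

lemma bddAbove_fn {G : Type*} (f : Linf G) : BddAbove (Set.range fun h => f h) :=
  ⟨‖f‖, by rintro _ ⟨h, rfl⟩; exact (le_abs_self _).trans (abs_le_nrm f h)⟩

lemma exists_mean {G : Type*} [Group G]
    (H : ∀ (f : G →₀ Linf G) (ε : ℝ), 0 < ε → ∃ h, bdry G f h < ε) :
    ∃ μ : Linf G →L[ℝ] ℝ,
        (∀ f : Linf G, (∀ h : G, 0 ≤ f h) → 0 ≤ μ f) ∧ ‖μ‖ = 1 ∧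
        (∀ (g : G) (f : Linf G), μ (ltrans g f) = μ f) := by
  obtain ⟨Λ, h1, h2⟩ := exists_extension_of_le_sublinear
    ⟨LinearMap.range (bdry G), 0⟩ (fun f : Linf G => ⨆ h, f h)
    (by
      intro c hc f
      rw [Real.mul_iSup_of_nonneg hc.le]
      rfl)
    (by
      intro x y
      refine ciSup_le fun h => ?_
      exact add_le_add (le_ciSup (bddAbove_fn x) h) (le_ciSup (bddAbove_fn y) h))
    (by
      rintro ⟨_, f, rfl⟩
      change 0 ≤ ⨆ h, bdry G f h
      refine le_of_forall_pos_le_add fun ε hε => ?_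
      obtain ⟨h, hh⟩ := H (-f) ε hε
      have h3 := le_ciSup (bddAbove_fn (bdry G f)) h
      have h4 : bdry G (-f) h = - bdry G f h := by rw [map_neg]; rfl
      rw [h4] at hh
      simp only at h3
      linarith)
  have hz : ∀ f, Λ (bdry G f) = 0 := fun f => h1 ⟨bdry G f, f, rfl⟩
  have hle : ∀ (f : Linf G) (c : ℝ), (∀ h, f h ≤ c) → Λ f ≤ c := fun f c hc =>
    (h2 f).trans (ciSup_le hc)
  have hneg : ∀ (f : Linf G) (c : ℝ), (∀ h, c ≤ f h) → c ≤ Λ f := by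
    intro f c hc
    have := hle (-f) (-c) (fun h => neg_le_neg (hc h))
    rw [map_neg] at this
    linarith
  have hb : ∀ f : Linf G, ‖Λ f‖ ≤ 1 * ‖f‖ := by
    intro f
    rw [one_mul, Real.norm_eq_abs, abs_le]
    exact ⟨hneg f _ fun h => (abs_le.1 (abs_le_nrm f h)).1,
      hle f _ fun h => (abs_le.1 (abs_le_nrm f h)).2⟩
  refine ⟨Λ.mkContinuous 1 hb, fun f hf => hneg f 0 hf, ?_, ?_⟩
  · apply le_antisymm (LinearMap.mkContinuous_norm_le _ zero_le_one _)
    have h5 : (1 : ℝ) ≤ Λ (lone G) := hneg (lone G) 1 fun h => le_rfl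
    have h6 := (Λ.mkContinuous 1 hb).le_opNorm (lone G)
    have h7 : ‖lone G‖ ≤ 1 := lp.norm_le_of_forall_le zero_le_one fun h => by
      change ‖(1 : ℝ)‖ ≤ 1
      simp
    have h8 : Λ (lone G) ≤ ‖(Λ.mkContinuous 1 hb) (lone G)‖ := le_abs_self _
    have h9 := mul_le_mul_of_nonneg_left h7 (norm_nonneg (Λ.mkContinuous 1 hb))
    linarith
  · intro g f
    have h3 := hz (Finsupp.single g f)
    have h4 : bdry G (Finsupp.single g f) = ltrans g f - f := by
      simp only [bdry, Finsupp.lsum_single]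
      rfl
    rw [h4, map_sub] at h3
    exact sub_eq_zero.1 h3

/-- A countable discrete group `G` is amenable if and only if there is no family
`(f_g)_{g ∈ G}` in `ℓ∞(G)` with `Σ_g ‖f_g‖_∞ < ∞` and `Σ_g (g·f_g − f_g) = 1`
(the sum converging in the sup norm); i.e. the fundamental class `ι[1]` is nonzero
in the `ℓ¹`-homology group `H₀^{ℓ¹}(G, ℓ∞(G))`. -/
theorem amenable_iff_no_ell_one_family_summing_to_one
    (G : Type*) [Group G] [Countable G] :
    (∃ μ : Linf G →L[ℝ] ℝ,
        (∀ f : Linf G, (∀ h : G, 0 ≤ f h) → 0 ≤ μ f) ∧ ‖μ‖ = 1 ∧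
        (∀ (g : G) (f : Linf G), μ (ltrans g f) = μ f)) ↔
      ¬ ∃ F : G → Linf G, Summable (fun g : G => ‖F g‖) ∧
          HasSum (fun g : G => ltrans g (F g) - F g) (lone G) := by
  constructor
  · rintro ⟨μ, hpos, hnorm, hinv⟩ ⟨F, -, hF⟩
    have h1 := hF.mapL μ
    have h0 : μ (lone G) = 0 := by
      refine h1.unique ?_
      simp [hinv, hasSum_zero]
    have hz : ∀ f, μ f ≤ 0 := by
      intro f
      have := hpos (‖f‖ • lone G - f) (fun h => by
        change 0 ≤ ‖f‖ * 1 - f h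
        have := le_abs_self (f h)
        have := abs_le_nrm f h
        linarith)
      rw [map_sub, map_smul, h0, smul_zero] at this
      linarith
    have : μ = 0 := by
      ext f
      have a := hz f
      have b := hz (-f)
      rw [map_neg] at b
      exact le_antisymm a (by simpa using b)
    simp [this] at hnorm
  · intro hno
    apply exists_mean
    by_contra! hcon
    obtain ⟨f, ε, hε, hf⟩ := hcon
    obtain ⟨F, hF0, hF⟩ := solve f.support f ε hε (fun h => by
      rw [← bdry_apply]; exact hf h)
    refine hno ⟨F, summable_of_ne_finset_zero (s := f.support) (fun g hg => by simp [hF0 g hg]), ?_⟩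
    have h2 : lone G = ∑ g ∈ f.support, (ltrans g (F g) - F g) := by
      ext h
      rw [lp.coeFn_sum, Finset.sum_apply]
      exact (hF h).symm
    rw [h2]
    refine hasSum_sum_of_ne_finset_zero fun g hg => ?_
    rw [hF0 g hg, sub_zero]
    rfl
end
end
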